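/- arXiv:2108.09513 — 4 statements merged into one kernel-verified Lean document; each statement's English description precedes it below -/
import Mathlib

section
/- Let d be a natural number and Θ ∈ ℝ^d. Define P : ℝ → ℝ by P(g) = Σ_{i=1}^d clip(g·Θ_i − 1/2), where clip(x) = min(max(x, 0), 1). For all real numbers g₁, g₂ with 0 < g₁ < g₂, one has P(g₁) = P(g₂) if and only if for every index i with Θ_i > 0, either g₂·Θ_i ≤ 1/2 or g₁·Θ_i ≥ 3/2. -/
/-- `clip x = min (max x 0) 1` clips a real number into `[0,1]`. -/
noncomputable def clip (x : ℝ) : ℝ := min (max x 0) 1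

section Clip

variable {a b x : ℝ}

theorem clip_nonneg : 0 ≤ clip x :=
  le_min (le_max_right x 0) zero_le_one

theorem clip_of_nonpos (hx : x ≤ 0) : clip x = 0 := by
  rw [clip, max_eq_right hx, min_eq_left zero_le_one]

theorem clip_of_one_le (hx : 1 ≤ x) : clip x = 1 :=
  min_eq_right (le_max_of_le_left hx)

theorem clip_mono : Monotone clip := fun _ _ h ↦
  min_le_min_right 1 (max_le_max_right 0 h)

theorem clip_lt_clip (hab : a < b) (hb : 0 < b) (ha : a < 1) : clip a < clip b :=
  calc
    clip a ≤ max a 0 := min_le_left _ _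
    _ < min b 1 := max_lt (lt_min hab ha) (lt_min hb one_pos)
    _ ≤ clip b := min_le_min_right 1 (le_max_left b 0)

theorem clip_eq_clip_iff_of_lt (hab : a < b) : clip a = clip b ↔ b ≤ 0 ∨ 1 ≤ a := by
  constructor
  · contrapose!
    rintro ⟨hb, ha⟩
    exact (clip_lt_clip hab hb ha).ne
  · rintro (hb | ha)
    · rw [clip_of_nonpos hb, clip_of_nonpos (hab.le.trans hb)]
    · rw [clip_of_one_le ha, clip_of_one_le (ha.trans hab.le)]

end Clip

section Threshold

variable {g g₁ g₂ t c : ℝ}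

theorem clip_mul_sub_eq_zero (hg : 0 ≤ g) (ht : t ≤ 0) (hc : 0 ≤ c) :
    clip (g * t - c) = 0 :=
  clip_of_nonpos (sub_nonpos.2 ((mul_nonpos_of_nonneg_of_nonpos hg ht).trans hc))

theorem clip_mul_sub_le_clip_mul_sub (hg₁ : 0 ≤ g₁) (hle : g₁ ≤ g₂) (hc : 0 ≤ c) :
    clip (g₁ * t - c) ≤ clip (g₂ * t - c) := by
  rcases le_total t 0 with ht | ht
  · rw [clip_mul_sub_eq_zero hg₁ ht hc]
    exact clip_nonneg
  · exact clip_mono (sub_le_sub_right (mul_le_mul_of_nonneg_right hle ht) c)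

theorem clip_mul_sub_eq_clip_mul_sub_iff (hg₁ : 0 ≤ g₁) (hlt : g₁ < g₂) (hc : 0 ≤ c) :
    clip (g₁ * t - c) = clip (g₂ * t - c) ↔ 0 < t → g₂ * t ≤ c ∨ c + 1 ≤ g₁ * t := by
  rcases le_or_gt t 0 with ht | ht
  · have heq : clip (g₁ * t - c) = clip (g₂ * t - c) := by
      rw [clip_mul_sub_eq_zero hg₁ ht hc, clip_mul_sub_eq_zero (hg₁.trans hlt.le) ht hc]
    exact iff_of_true heq fun ht' ↦ absurd ht' ht.not_gt
  · have hlt' : g₁ * t - c < g₂ * t - c := sub_lt_sub_right (mul_lt_mul_of_pos_right hlt ht) c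
    rw [clip_eq_clip_iff_of_lt hlt', sub_nonpos, le_sub_iff_add_le', forall_prop_of_true ht]

end Threshold

theorem clip_sum_eq_iff_general {ι : Type*} {s : Finset ι} {Θ c : ι → ℝ} {g₁ g₂ : ℝ}
    (hg₁ : 0 ≤ g₁) (hlt : g₁ < g₂) (hc : ∀ i ∈ s, 0 ≤ c i) :
    ∑ i ∈ s, clip (g₁ * Θ i - c i) = ∑ i ∈ s, clip (g₂ * Θ i - c i) ↔
      ∀ i ∈ s, 0 < Θ i → g₂ * Θ i ≤ c i ∨ c i + 1 ≤ g₁ * Θ i := by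
  rw [Finset.sum_eq_sum_iff_of_le fun i hi ↦ clip_mul_sub_le_clip_mul_sub hg₁ hlt.le (hc i hi)]
  exact forall₂_congr fun i hi ↦ clip_mul_sub_eq_clip_mul_sub_iff hg₁ hlt (hc i hi)

/-- Characterization of the equality case in the monotonicity of
`g ↦ ∑ i, clip (g * Θ i - 1/2)`. -/
theorem clip_sum_eq_iff (d : ℕ) (Θ : Fin d → ℝ) (g₁ g₂ : ℝ)
    (hg₁ : 0 < g₁) (hlt : g₁ < g₂) :
    (∑ i, clip (g₁ * Θ i - 1/2)) = (∑ i, clip (g₂ * Θ i - 1/2)) ↔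
      ∀ i, 0 < Θ i → g₂ * Θ i ≤ 1/2 ∨ 3/2 ≤ g₁ * Θ i := by
  have half_add_one : (1 / 2 + 1 : ℝ) = 3 / 2 := by norm_num
  simpa only [Finset.mem_univ, true_imp_iff, half_add_one] using
    clip_sum_eq_iff_general (s := Finset.univ) (Θ := Θ) (c := fun _ ↦ 1 / 2) hg₁.le hlt
      fun _ _ ↦ one_half_pos.le
end

section
/- Let t and κ be real numbers with t ≥ 1 and κ ≥ 1, and set N = t·κ² and d = t·κ. Then 2^{N(N−1)/2} ≥ (1/(2κ²)) · 2^{t²(κ⁴−3κ²)/2} · ( κ · 2^{d(d−1)/2} + (κ(κ−1)/2) · 2^{d²} ). -/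
/-!
An edge search inside a cluster of size `d` is no larger than one between two such clusters, so the
`κ` clusters and `κ (κ - 1) / 2` pairs together cost at most `κ (κ + 1) / 2` times `b ^ d ^ 2`.
After multiplication by the reduction factor `b ^ (t² (κ⁴ - 3 κ²) / 2)`, the exponent of `b ^ d ^ 2`
falls short of that of the full search by exactly `t (t - 1) κ² / 2`, which is nonnegative for
`1 ≤ t`.
-/

/-- The edge search space of a graph with `N` nodes, with `b` possible states for each pair of
nodes (`b = 2` for presence or absence of an edge). The number of nodes is allowed to be real. -/
noncomputable def graphSearchSpace (b N : ℝ) : ℝ :=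
  b ^ (N * (N - 1) / 2)

/-- The search space `S_node + S_link` of a partition into `κ` clusters of size `d`: one graph
search per cluster, and a search over all `d ^ 2` cross edges per pair of clusters. -/
noncomputable def coarseSearchSpace (b κ d : ℝ) : ℝ :=
  κ * graphSearchSpace b d + κ * (κ - 1) / 2 * b ^ (d ^ 2)

section

variable {b t κ d : ℝ}

lemma graphSearchSpace_le_rpow_sq (hb : 1 ≤ b) (hd : 0 ≤ d) :
    graphSearchSpace b d ≤ b ^ (d ^ 2) :=
  Real.rpow_le_rpow_of_exponent_le hb (by linarith [sq_nonneg d])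

lemma coarseSearchSpace_le_mul_rpow_sq (hb : 1 ≤ b) (hκ : 0 ≤ κ) (hd : 0 ≤ d) :
    coarseSearchSpace b κ d ≤ κ * (κ + 1) / 2 * b ^ (d ^ 2) :=
  calc
    coarseSearchSpace b κ d ≤ κ * b ^ (d ^ 2) + κ * (κ - 1) / 2 * b ^ (d ^ 2) := by
      unfold coarseSearchSpace
      gcongr
      exact graphSearchSpace_le_rpow_sq hb hd
    _ = κ * (κ + 1) / 2 * b ^ (d ^ 2) := by ring

lemma graphSearchSpace_mul_sq (hb : 0 < b) (t κ : ℝ) :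
    graphSearchSpace b (t * κ ^ 2) =
      b ^ (t ^ 2 * (κ ^ 4 - 3 * κ ^ 2) / 2) * b ^ ((t * κ) ^ 2) *
        b ^ (t * (t - 1) * κ ^ 2 / 2) := by
  rw [graphSearchSpace, ← Real.rpow_add hb, ← Real.rpow_add hb]
  ring_nf

lemma rpow_mul_rpow_sq_le_graphSearchSpace (hb : 1 ≤ b) (ht : 1 ≤ t) (κ : ℝ) :
    b ^ (t ^ 2 * (κ ^ 4 - 3 * κ ^ 2) / 2) * b ^ ((t * κ) ^ 2) ≤
      graphSearchSpace b (t * κ ^ 2) := by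
  have slack_nonneg : 0 ≤ t * (t - 1) * κ ^ 2 / 2 := by
    have : 0 ≤ t - 1 := sub_nonneg.2 ht
    positivity
  rw [graphSearchSpace_mul_sq (by positivity)]
  exact le_mul_of_one_le_right (by positivity) (Real.one_le_rpow hb slack_nonneg)

lemma rpow_mul_coarseSearchSpace_le (hb : 1 ≤ b) (ht : 1 ≤ t) (hκ : 0 ≤ κ) :
    b ^ (t ^ 2 * (κ ^ 4 - 3 * κ ^ 2) / 2) * coarseSearchSpace b κ (t * κ) ≤
      κ * (κ + 1) / 2 * graphSearchSpace b (t * κ ^ 2) :=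
  calc
    _ ≤ b ^ (t ^ 2 * (κ ^ 4 - 3 * κ ^ 2) / 2) * (κ * (κ + 1) / 2 * b ^ ((t * κ) ^ 2)) := by
      gcongr
      exact coarseSearchSpace_le_mul_rpow_sq hb hκ (by positivity)
    _ = κ * (κ + 1) / 2 * (b ^ (t ^ 2 * (κ ^ 4 - 3 * κ ^ 2) / 2) * b ^ ((t * κ) ^ 2)) := by ring
    _ ≤ κ * (κ + 1) / 2 * graphSearchSpace b (t * κ ^ 2) := by
      gcongr
      exact rpow_mul_rpow_sq_le_graphSearchSpace hb ht κ

theorem coarse_grained_search_reduction_general (hb : 1 ≤ b) (ht : 1 ≤ t) (hκ : 1 / 3 ≤ κ) :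
    1 / (2 * κ ^ 2) * b ^ (t ^ 2 * (κ ^ 4 - 3 * κ ^ 2) / 2) * coarseSearchSpace b κ (t * κ) ≤
      graphSearchSpace b (t * κ ^ 2) := by
  have κ_pos : 0 < κ := by linarith
  have coeff_le : κ * (κ + 1) / 2 ≤ 2 * κ ^ 2 := by nlinarith
  have graph_nonneg : 0 ≤ graphSearchSpace b (t * κ ^ 2) := Real.rpow_nonneg (by positivity) _
  rw [mul_assoc, one_div_mul_eq_div, div_le_iff₀' (by positivity)]
  exact (rpow_mul_coarseSearchSpace_le hb ht κ_pos.le).trans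
    (mul_le_mul_of_nonneg_right coeff_le graph_nonneg)

end

/-- Quantitative search-space reduction of coarse-grained searching (Theorem 4.1):
with `N = t κ²` and `d = t κ`, the full search space `2 ^ (N(N-1)/2)` exceeds
`(1/(2κ²)) · 2 ^ (t²(κ⁴ - 3κ²)/2)` times the coarse-grained search space
`κ · 2 ^ (d(d-1)/2) + (κ(κ-1)/2) · 2 ^ (d²)`. -/
theorem coarse_grained_search_reduction (t κ : ℝ) (ht : 1 ≤ t) (hκ : 1 ≤ κ)
    (N d : ℝ) (hN : N = t * κ ^ 2) (hd : d = t * κ) :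
    (2 : ℝ) ^ (N * (N - 1) / 2) ≥
      (1 / (2 * κ ^ 2)) * (2 : ℝ) ^ (t ^ 2 * (κ ^ 4 - 3 * κ ^ 2) / 2) *
        (κ * (2 : ℝ) ^ (d * (d - 1) / 2) + (κ * (κ - 1) / 2) * (2 : ℝ) ^ (d ^ 2)) := by
  subst hN hd
  exact coarse_grained_search_reduction_general one_le_two ht (by linarith)
end

section
/- Let d ≥ 1 be a natural number and let p : ℝ^d → ℝ be differentiable with L-Lipschitz gradient, i.e., ‖∇p(x) − ∇p(y)‖₂ ≤ L‖x − y‖₂ for all x, y ∈ ℝ^d. Let Θ ∈ ℝ^d, let η > 0, and let s ∈ ℝ^d have s_l ∈ {−1, 1} for every coordinate l. Then p(Θ − η·s) ≤ p(Θ) − η · Σ_{l=1}^d |(∇p(Θ))_l| + 2η · Σ_{l : s_l·(∇p(Θ))_l ≤ 0} |(∇p(Θ))_l| + (L·d/2)·η². -/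
/-!
The gradient of `p` drifts at most linearly along the segment from `Θ` to `Θ - η s`, so `p` exceeds
its first-order expansion at `Θ` by at most `L / 2 * ‖η s‖²`, where `‖s‖² = d` because all
coordinates of `s` are `±1`. In the first-order term `-η ⟪∇p(Θ), s⟫` each product `s_l (∇p(Θ))_l` is
`|(∇p(Θ))_l|` up to sign; replacing all of them by their absolute values costs `2 |(∇p(Θ))_l|` for
each `l` where the sign is wrong.
-/

section Taylor

open Set

theorem norm_image_sub_sub_le_of_norm_hasFDerivWithin_sub_le {E F : Type*}
    [NormedAddCommGroup E] [NormedSpace ℝ E] [NormedAddCommGroup F] [NormedSpace ℝ F]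
    {f : E → F} {f' : E → E →L[ℝ] F} {x y : E} {L : ℝ}
    (hf : ∀ z ∈ segment ℝ x y, HasFDerivWithinAt f (f' z) (segment ℝ x y) z)
    (hL : ∀ z ∈ segment ℝ x y, ‖f' z - f' x‖ ≤ L * ‖z - x‖) :
    ‖f y - f x - f' x (y - x)‖ ≤ L / 2 * ‖y - x‖ ^ 2 := by
  let γ : ℝ → E := AffineMap.lineMap x y
  let φ : ℝ → F := fun t ↦ f (γ t) - f x - t • f' x (y - x)
  have hγ : MapsTo γ (Icc 0 1) (segment ℝ x y) :=
    (convex_segment x y).mapsTo_lineMap (left_mem_segment ℝ x y) (right_mem_segment ℝ x y)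
  have hφ : ∀ t ∈ Icc (0 : ℝ) 1,
      HasDerivWithinAt φ ((f' (γ t) - f' x) (y - x)) (Icc 0 1) t := fun t ht ↦ by
    have hfγ := (hf _ (hγ ht)).comp_hasDerivWithinAt t AffineMap.hasDerivWithinAt_lineMap hγ
    refine ((hfγ.sub_const (f x)).sub
      ((hasDerivWithinAt_id t _).smul_const (f' x (y - x)))).congr_deriv ?_
    rw [one_smul, sub_apply]
  have hφ' : ∀ t ∈ Ico (0 : ℝ) 1,
      ‖(f' (γ t) - f' x) (y - x)‖ ≤ L * ‖y - x‖ ^ 2 * t := fun t ht ↦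
    calc ‖(f' (γ t) - f' x) (y - x)‖
      _ ≤ ‖f' (γ t) - f' x‖ * ‖y - x‖ := ContinuousLinearMap.le_opNorm _ _
      _ ≤ L * ‖γ t - x‖ * ‖y - x‖ := by gcongr; exact hL _ (hγ (Ico_subset_Icc_self ht))
      _ = L * ‖y - x‖ ^ 2 * t := by
        have hγt : γ t - x = t • (y - x) := by simp [γ, AffineMap.lineMap_apply]
        rw [hγt, norm_smul, Real.norm_of_nonneg ht.1]
        ring
  have hB : ∀ t : ℝ, HasDerivAt (fun t ↦ L / 2 * ‖y - x‖ ^ 2 * t ^ 2) (L * ‖y - x‖ ^ 2 * t) t :=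
    fun t ↦ ((hasDerivAt_pow 2 t).const_mul _).congr_deriv (by push_cast; ring)
  have hφ₁ : ‖φ 1‖ ≤ L / 2 * ‖y - x‖ ^ 2 * 1 ^ 2 :=
    image_norm_le_of_norm_deriv_right_le_deriv_boundary
      (fun t ht ↦ (hφ t ht).continuousWithinAt)
      (fun t ht ↦ (hφ t (Ico_subset_Icc_self ht)).mono_of_mem_nhdsWithin
        (Icc_mem_nhdsGE_of_mem ht))
      (by simp [φ, γ]) hB hφ' (right_mem_Icc.2 zero_le_one)
  simpa [φ, γ] using hφ₁

theorem le_add_inner_add_of_norm_hasGradientWithin_sub_le {E : Type*} [NormedAddCommGroup E]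
    [InnerProductSpace ℝ E] [CompleteSpace E] {f : E → ℝ} {f' : E → E} {x y : E} {L : ℝ}
    (hf : ∀ z ∈ segment ℝ x y, HasGradientWithinAt f (f' z) (segment ℝ x y) z)
    (hL : ∀ z ∈ segment ℝ x y, ‖f' z - f' x‖ ≤ L * ‖z - x‖) :
    f y ≤ f x + inner ℝ (f' x) (y - x) + L / 2 * ‖y - x‖ ^ 2 := by
  have htaylor := norm_image_sub_sub_le_of_norm_hasFDerivWithin_sub_le
    (fun z hz ↦ (hf z hz).hasFDerivWithinAt)
    (fun z hz ↦ by simpa only [← map_sub, LinearIsometryEquiv.norm_map] using hL z hz)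
  rw [InnerProductSpace.toDual_apply_apply] at htaylor
  linarith [Real.le_norm_self (f y - f x - inner ℝ (f' x) (y - x))]

end Taylor

section Sign

variable {ι : Type*}

theorem sum_eq_sum_abs_sub_two_nsmul_sum_abs_filter_nonpos {G : Type*} [AddCommGroup G]
    [LinearOrder G] [IsOrderedAddMonoid G] (t : Finset ι) (a : ι → G) :
    ∑ i ∈ t, a i = ∑ i ∈ t, |a i| - 2 • ∑ i ∈ t with a i ≤ 0, |a i| := by
  rw [Finset.sum_filter, Finset.smul_sum, ← Finset.sum_sub_distrib]
  refine Finset.sum_congr rfl fun i _ ↦ ?_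
  split_ifs with hi
  · rw [abs_of_nonpos hi]
    abel
  · rw [abs_of_pos (not_le.1 hi), smul_zero, sub_zero]

variable [Fintype ι]

theorem norm_sq_eq_card_of_norm_apply_eq_one {𝕜 : Type*} [RCLike 𝕜] {s : EuclideanSpace 𝕜 ι}
    (hs : ∀ i, ‖s i‖ = 1) : ‖s‖ ^ 2 = Fintype.card ι := by
  simp [EuclideanSpace.norm_sq_eq, hs]

theorem inner_eq_sum_abs_sub_two_mul_sum_abs_filter_nonpos {s : EuclideanSpace ℝ ι}
    (hs : ∀ i, |s i| = 1) (g : EuclideanSpace ℝ ι) :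
    inner ℝ g s = ∑ i, |g i| - 2 * ∑ i with s i * g i ≤ 0, |g i| := by
  have habs (i : ι) : |s i * g i| = |g i| := by rw [abs_mul, hs, one_mul]
  calc inner ℝ g s
    _ = ∑ i, s i * g i := by simp [PiLp.inner_apply]
    _ = ∑ i, |g i| - 2 * ∑ i with s i * g i ≤ 0, |g i| := by
      rw [sum_eq_sum_abs_sub_two_nsmul_sum_abs_filter_nonpos, nsmul_eq_mul, Nat.cast_ofNat]
      simp only [habs]

theorem signSGD_descent_step_general {p : EuclideanSpace ℝ ι → ℝ} {L η : ℝ}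
    {Θ s : EuclideanSpace ℝ ι}
    (hdiff : ∀ z ∈ segment ℝ Θ (Θ - η • s), DifferentiableAt ℝ p z)
    (hlip : ∀ z ∈ segment ℝ Θ (Θ - η • s), ‖gradient p z - gradient p Θ‖ ≤ L * ‖z - Θ‖)
    (hs : ∀ i, |s i| = 1) :
    p (Θ - η • s) ≤
      p Θ - η * ∑ i, |gradient p Θ i|
        + 2 * η * ∑ i with s i * gradient p Θ i ≤ 0, |gradient p Θ i|
        + L * Fintype.card ι / 2 * η ^ 2 := by
  have hstep : Θ - η • s - Θ = -(η • s) := by abel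
  calc p (Θ - η • s)
    _ ≤ p Θ + inner ℝ (gradient p Θ) (-(η • s)) + L / 2 * ‖-(η • s)‖ ^ 2 :=
      hstep ▸ le_add_inner_add_of_norm_hasGradientWithin_sub_le
        (fun z hz ↦ (hdiff z hz).hasGradientAt.hasFDerivAt.hasFDerivWithinAt) hlip
    _ = p Θ - η * inner ℝ (gradient p Θ) s + L / 2 * (η ^ 2 * ‖s‖ ^ 2) := by
      rw [inner_neg_right, real_inner_smul_right, norm_neg, norm_smul, mul_pow, Real.norm_eq_abs,
        sq_abs, ← sub_eq_add_neg]
    _ = p Θ - η * ∑ i, |gradient p Θ i|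
          + 2 * η * ∑ i with s i * gradient p Θ i ≤ 0, |gradient p Θ i|
          + L * Fintype.card ι / 2 * η ^ 2 := by
      rw [inner_eq_sum_abs_sub_two_mul_sum_abs_filter_nonpos hs,
        norm_sq_eq_card_of_norm_apply_eq_one hs]
      ring

end Sign

/-- Deterministic one-step descent inequality for a signSGD update (from the proof of
Theorem 4.3): if `p : ℝ^d → ℝ` is differentiable with `L`-Lipschitz gradient,
`η > 0`, and `s ∈ {-1, 1}^d`, then
`p(Θ - η s) ≤ p(Θ) - η ‖∇p(Θ)‖₁ + 2η ∑_{l : s_l (∇p(Θ))_l ≤ 0} |(∇p(Θ))_l| + (Ld/2) η²`. -/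
theorem signSGD_descent_step (d : ℕ) (hd : 1 ≤ d)
    (p : EuclideanSpace ℝ (Fin d) → ℝ) (L : ℝ)
    (hdiff : Differentiable ℝ p)
    (hlip : ∀ x y, ‖gradient p x - gradient p y‖ ≤ L * ‖x - y‖)
    (Θ s : EuclideanSpace ℝ (Fin d)) (η : ℝ) (hη : 0 < η)
    (hs : ∀ l, s l = -1 ∨ s l = 1) :
    p (Θ - η • s) ≤
      p Θ - η * (∑ l, |gradient p Θ l|)
        + 2 * η * ∑ l ∈ Finset.univ.filter
            (fun l => s l * gradient p Θ l ≤ 0), |gradient p Θ l|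
        + (L * d / 2) * η ^ 2 := by
  simpa only [Fintype.card_fin] using signSGD_descent_step_general (fun z _ ↦ hdiff z)
    (fun z _ ↦ hlip z Θ) fun l ↦ (abs_eq zero_le_one).2 (hs l).symm
end

section
/- Let d ≥ 1 be a natural number and let p : ℝ^d → ℝ be differentiable with L-Lipschitz gradient, i.e., ‖∇p(x) − ∇p(y)‖₂ ≤ L‖x − y‖₂ for all x, y ∈ ℝ^d. Let (Ω, 𝔽, ℙ) be a probability space, let ĝ : Ω → ℝ^d be a measurable random vector, let Θ ∈ ℝ^d, and let η > 0. Define sgn : ℝ → ℝ by sgn(x) = 1 if x ≥ 0 and sgn(x) = −1 if x < 0, applied coordinatewise. Then E[ p(Θ − η · sgn(ĝ)) ] ≤ p(Θ) − η · Σ_{l=1}^d |(∇p(Θ))_l| + (L·d/2)·η² + 2η · Σ_{l=1}^d |(∇p(Θ))_l| · ℙ[ sgn(ĝ_l) ≠ sgn((∇p(Θ))_l) ]. -/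
open MeasureTheory
open scoped ProbabilityTheory

/-- The sign function `sgn(x) = 1` if `x ≥ 0` and `-1` otherwise. -/
noncomputable def sgn (x : ℝ) : ℝ := if 0 ≤ x then 1 else -1

/-
By the descent lemma, `p(Θ - η s) ≤ p(Θ) - η ⟪∇p(Θ), s⟫ + (L/2) η² ‖s‖²`, and every sign vector `s`
satisfies `‖s‖² = d`. It remains to average `⟪∇p(Θ), sgn ĝ⟫`. Coordinatewise, `a * sgn x` equals
`|a|` when the signs of `x` and `a` agree and `-|a|` when they differ, so that
`𝔼[a * sgn X] = |a| - 2 |a| ℙ[sgn X ≠ sgn a]`.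
-/

section DescentLemma

open scoped Gradient RealInnerProductSpace

theorem norm_add_sub_sub_le_of_norm_fderiv_sub_le
    {E F : Type*} [NormedAddCommGroup E] [NormedSpace ℝ E] [NormedAddCommGroup F] [NormedSpace ℝ F]
    {f : E → F} {f' : E → E →L[ℝ] F} {L : ℝ} {x : E} (hf : ∀ y, HasFDerivAt f (f' y) y)
    (hlip : ∀ y, ‖f' y - f' x‖ ≤ L * ‖y - x‖) (v : E) :
    ‖f (x + v) - f x - f' x v‖ ≤ L / 2 * ‖v‖ ^ 2 := by
  let remainder (t : ℝ) : F := f (x + t • v) - f x - t • f' x v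
  have hremainder (t : ℝ) : HasDerivAt remainder ((f' (x + t • v) - f' x) v) t := by
    have hline : HasDerivAt (fun t : ℝ ↦ x + t • v) v t := by
      simpa using ((hasDerivAt_id t).smul_const v).const_add x
    simpa using (((hf (x + t • v)).comp_hasDerivAt t hline).sub_const (f x)).fun_sub
      ((hasDerivAt_id t).smul_const (f' x v))
  have hquadratic (t : ℝ) :
      HasDerivAt (fun t ↦ L / 2 * ‖v‖ ^ 2 * t ^ 2) (L * t * ‖v‖ ^ 2) t :=
    ((hasDerivAt_pow 2 t).const_mul (L / 2 * ‖v‖ ^ 2)).congr_deriv (by push_cast; ring)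
  have hbound (t : ℝ) (ht : 0 ≤ t) : ‖(f' (x + t • v) - f' x) v‖ ≤ L * t * ‖v‖ ^ 2 :=
    calc ‖(f' (x + t • v) - f' x) v‖
        ≤ ‖f' (x + t • v) - f' x‖ * ‖v‖ := ContinuousLinearMap.le_opNorm _ v
      _ ≤ L * ‖x + t • v - x‖ * ‖v‖ := by gcongr; exact hlip _
      _ = L * t * ‖v‖ ^ 2 := by
        rw [add_sub_cancel_left, norm_smul, Real.norm_of_nonneg ht]; ring
  have hle : ‖remainder 1‖ ≤ L / 2 * ‖v‖ ^ 2 * 1 ^ 2 :=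
    image_norm_le_of_norm_deriv_right_le_deriv_boundary
      (fun t _ ↦ (hremainder t).continuousAt.continuousWithinAt)
      (fun t _ ↦ (hremainder t).hasDerivWithinAt) (by simp [remainder]) hquadratic
      (fun t ht ↦ hbound t ht.1) (Set.right_mem_Icc.2 zero_le_one)
  simpa [remainder] using hle

theorem le_add_inner_gradient_add_of_norm_gradient_sub_le
    {E : Type*} [NormedAddCommGroup E] [InnerProductSpace ℝ E] [CompleteSpace E]
    {f : E → ℝ} {L : ℝ} {x : E} (hf : Differentiable ℝ f)
    (hlip : ∀ y, ‖∇ f y - ∇ f x‖ ≤ L * ‖y - x‖) (v : E) :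
    f (x + v) ≤ f x + ⟪∇ f x, v⟫ + L / 2 * ‖v‖ ^ 2 := by
  have hremainder := norm_add_sub_sub_le_of_norm_fderiv_sub_le
    (fun y ↦ (hf y).hasGradientAt.hasFDerivAt)
    (fun y ↦ by simpa only [← map_sub, LinearIsometryEquiv.norm_map] using hlip y) v
  rw [InnerProductSpace.toDual_apply_apply] at hremainder
  linarith [Real.le_norm_self (f (x + v) - f x - ⟪∇ f x, v⟫)]

end DescentLemma

section Sign

theorem sgn_eq_one_or_eq_neg_one (x : ℝ) : sgn x = 1 ∨ sgn x = -1 :=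
  ite_eq_or_eq _ _ _

theorem sgn_sq (x : ℝ) : sgn x ^ 2 = 1 :=
  sq_eq_one_iff.2 (sgn_eq_one_or_eq_neg_one x)

theorem mul_sgn_self (a : ℝ) : a * sgn a = |a| := by
  rcases le_or_gt 0 a with ha | ha
  · simp [sgn, ha, abs_of_nonneg ha]
  · simp [sgn, ha.not_ge, abs_of_neg ha]

theorem sgn_eq_neg_of_ne {x y : ℝ} (h : sgn x ≠ sgn y) : sgn x = -sgn y :=
  (sq_eq_sq_iff_eq_or_eq_neg.1 ((sgn_sq x).trans (sgn_sq y).symm)).resolve_left h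

theorem mul_sgn (a x : ℝ) :
    a * sgn x = |a| - 2 * |a| * {y | sgn y ≠ sgn a}.indicator 1 x := by
  by_cases h : sgn x = sgn a
  · simp [h, mul_sgn_self]
  · have hx : x ∈ {y | sgn y ≠ sgn a} := h
    rw [Set.indicator_of_mem hx, sgn_eq_neg_of_ne h, mul_neg, mul_sgn_self, Pi.one_apply]
    ring

theorem measurable_sgn : Measurable sgn :=
  Measurable.ite measurableSet_Ici measurable_const measurable_const

theorem integral_mul_sgn {Ω : Type*} [MeasurableSpace Ω] {μ : Measure Ω} [IsProbabilityMeasure μ]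
    {X : Ω → ℝ} (hX : AEMeasurable X μ) (a : ℝ) :
    ∫ ω, a * sgn (X ω) ∂μ = |a| - 2 * |a| * μ.real {ω | sgn (X ω) ≠ sgn a} := by
  have hflip : MeasurableSet {x | sgn x ≠ sgn a} :=
    (measurable_sgn (measurableSet_singleton (sgn a))).compl
  have hind : Integrable ({x | sgn x ≠ sgn a}.indicator (1 : ℝ → ℝ)) (μ.map X) :=
    (integrable_const 1).indicator hflip
  have hprob : ∫ ω, {x | sgn x ≠ sgn a}.indicator 1 (X ω) ∂μ
      = μ.real {ω | sgn (X ω) ≠ sgn a} := by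
    rw [← integral_map hX hind.aestronglyMeasurable, integral_indicator_one hflip,
      measureReal_def, Measure.map_apply_of_aemeasurable hX hflip]
    rfl
  have hint : Integrable (fun ω ↦ 2 * |a| * {x | sgn x ≠ sgn a}.indicator 1 (X ω)) μ :=
    (hind.comp_aemeasurable hX).const_mul _
  simp only [mul_sgn]
  rw [integral_sub (integrable_const _) hint, integral_const_mul, hprob, integral_const,
    probReal_univ, one_smul]

end Sign

section SignVector

open scoped RealInnerProductSpace

variable {ι : Type*}

/-- The coordinatewise sign of a vector, i.e. the update direction of signSGD. It is valued in
`EuclideanSpace` so that its norm is the `ℓ²` norm. -/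
noncomputable def sgnVec (v : EuclideanSpace ℝ ι) : EuclideanSpace ℝ ι :=
  WithLp.toLp 2 fun i ↦ sgn (v i)

theorem measurable_sgnVec : Measurable (sgnVec (ι := ι)) :=
  (WithLp.measurable_toLp 2 _).comp <|
    measurable_pi_lambda _ fun i ↦ measurable_sgn.comp (by fun_prop)

theorem finite_range_sgnVec [Finite ι] : (Set.range (sgnVec (ι := ι))).Finite := by
  have hsigns : (Set.univ.pi fun _ : ι ↦ ({1, -1} : Set ℝ)).Finite :=
    Set.Finite.pi fun _ ↦ Set.toFinite _
  refine (hsigns.image (WithLp.toLp 2)).subset ?_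
  rintro _ ⟨v, rfl⟩
  exact ⟨_, fun i _ ↦ sgn_eq_one_or_eq_neg_one (v i), rfl⟩

variable {Ω : Type*} [MeasurableSpace Ω] {μ : Measure Ω} {v : Ω → EuclideanSpace ℝ ι}

theorem integrable_comp_sgnVec [Finite ι] [IsFiniteMeasure μ] {F : Type*} [NormedAddCommGroup F]
    (hv : AEMeasurable v μ) (f : EuclideanSpace ℝ ι → F) :
    Integrable (fun ω ↦ f (sgnVec (v ω))) μ := by
  let signs : SimpleFunc (EuclideanSpace ℝ ι) (EuclideanSpace ℝ ι) :=
    ⟨sgnVec, fun s ↦ measurable_sgnVec (measurableSet_singleton s), finite_range_sgnVec⟩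
  exact (signs.map f).integrable_of_isFiniteMeasure.comp_aemeasurable hv

variable [Fintype ι]

theorem norm_sgnVec_sq (v : EuclideanSpace ℝ ι) : ‖sgnVec v‖ ^ 2 = Fintype.card ι := by
  simp [EuclideanSpace.real_norm_sq_eq, sgnVec, sgn_sq]

theorem integral_inner_sgnVec [IsProbabilityMeasure μ] (hv : AEMeasurable v μ)
    (g : EuclideanSpace ℝ ι) :
    ∫ ω, ⟪g, sgnVec (v ω)⟫ ∂μ
      = ∑ i, |g i| - 2 * ∑ i, |g i| * μ.real {ω | sgn (v ω i) ≠ sgn (g i)} :=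
  calc ∫ ω, ⟪g, sgnVec (v ω)⟫ ∂μ
      = ∫ ω, ∑ i, g i * sgn (v ω i) ∂μ := by
        simp only [PiLp.inner_apply, Real.inner_apply, sgnVec]
    _ = ∑ i, ∫ ω, g i * sgn (v ω i) ∂μ :=
        integral_finsetSum _ fun i _ ↦ integrable_comp_sgnVec hv fun s ↦ g i * s i
    _ = ∑ i, (|g i| - 2 * |g i| * μ.real {ω | sgn (v ω i) ≠ sgn (g i)}) :=
        Finset.sum_congr rfl fun i _ ↦ integral_mul_sgn (by fun_prop) (g i)
    _ = ∑ i, |g i| - 2 * ∑ i, |g i| * μ.real {ω | sgn (v ω i) ≠ sgn (g i)} := by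
        simp only [Finset.sum_sub_distrib, Finset.mul_sum, mul_assoc]

end SignVector

section SignDescent

open scoped Gradient RealInnerProductSpace

variable {ι : Type*} [Fintype ι] {p : EuclideanSpace ℝ ι → ℝ} {L : ℝ} {Θ : EuclideanSpace ℝ ι}

theorem apply_sub_smul_sgnVec_le (hdiff : Differentiable ℝ p)
    (hlip : ∀ x, ‖∇ p x - ∇ p Θ‖ ≤ L * ‖x - Θ‖) (η : ℝ) (v : EuclideanSpace ℝ ι) :
    p (Θ - η • sgnVec v)
      ≤ p Θ - η * ⟪∇ p Θ, sgnVec v⟫ + L * Fintype.card ι / 2 * η ^ 2 := by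
  have hdescent :=
    le_add_inner_gradient_add_of_norm_gradient_sub_le hdiff hlip (-(η • sgnVec v))
  rw [← sub_eq_add_neg, inner_neg_right, real_inner_smul_right, norm_neg, norm_smul, mul_pow,
    norm_sgnVec_sq, Real.norm_eq_abs, sq_abs] at hdescent
  linarith

theorem signSGD_expected_descent_step_general (hdiff : Differentiable ℝ p)
    (hlip : ∀ x, ‖∇ p x - ∇ p Θ‖ ≤ L * ‖x - Θ‖)
    {Ω : Type*} [MeasurableSpace Ω] {μ : Measure Ω} [IsProbabilityMeasure μ]
    {ghat : Ω → EuclideanSpace ℝ ι} (hghat : AEMeasurable ghat μ) (η : ℝ) :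
    ∫ ω, p (Θ - η • sgnVec (ghat ω)) ∂μ
      ≤ p Θ - η * (∑ i, |∇ p Θ i|) + L * Fintype.card ι / 2 * η ^ 2
        + 2 * η * ∑ i, |∇ p Θ i| * μ.real {ω | sgn (ghat ω i) ≠ sgn (∇ p Θ i)} := by
  have hinner : Integrable (fun ω ↦ η * ⟪∇ p Θ, sgnVec (ghat ω)⟫) μ :=
    integrable_comp_sgnVec hghat fun s ↦ η * ⟪∇ p Θ, s⟫
  have hlinear : Integrable (fun ω ↦ p Θ - η * ⟪∇ p Θ, sgnVec (ghat ω)⟫) μ :=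
    (integrable_const _).sub hinner
  calc ∫ ω, p (Θ - η • sgnVec (ghat ω)) ∂μ
      ≤ ∫ ω, (p Θ - η * ⟪∇ p Θ, sgnVec (ghat ω)⟫ + L * Fintype.card ι / 2 * η ^ 2) ∂μ :=
        integral_mono (integrable_comp_sgnVec hghat fun s ↦ p (Θ - η • s))
          (hlinear.add (integrable_const _))
          fun ω ↦ apply_sub_smul_sgnVec_le hdiff hlip η (ghat ω)
    _ = p Θ - η * ∫ ω, ⟪∇ p Θ, sgnVec (ghat ω)⟫ ∂μ + L * Fintype.card ι / 2 * η ^ 2 := by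
        rw [integral_add hlinear (integrable_const _), integral_sub (integrable_const _) hinner,
          integral_const_mul]
        simp only [integral_const, probReal_univ, one_smul]
    _ = _ := by rw [integral_inner_sgnVec hghat]; ring

end SignDescent

/-- Expected per-iteration descent bound for signSGD with a random gradient estimate
(from the proof of Theorem 4.3): if `p : ℝ^d → ℝ` is differentiable with `L`-Lipschitz
gradient, `ĝ` is a measurable random vector, and `η > 0`, then
`E[p(Θ - η sgn(ĝ))] ≤ p(Θ) - η ‖∇p(Θ)‖₁ + (Ld/2) η²
  + 2η ∑ l |(∇p(Θ))_l| · ℙ[sgn(ĝ_l) ≠ sgn((∇p(Θ))_l)]`. -/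
theorem signSGD_expected_descent_step (d : ℕ) (hd : 1 ≤ d)
    (p : EuclideanSpace ℝ (Fin d) → ℝ) (L : ℝ)
    (hdiff : Differentiable ℝ p)
    (hlip : ∀ x y, ‖gradient p x - gradient p y‖ ≤ L * ‖x - y‖)
    {Ω : Type*} [MeasureSpace Ω] [IsProbabilityMeasure (ℙ : Measure Ω)]
    (ghat : Ω → EuclideanSpace ℝ (Fin d)) (hghat : Measurable ghat)
    (Θ : EuclideanSpace ℝ (Fin d)) (η : ℝ) (hη : 0 < η) :
    (∫ ω, p (Θ - η • (WithLp.equiv 2 (Fin d → ℝ)).symm (fun l => sgn (ghat ω l)))) ≤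
      p Θ - η * (∑ l, |gradient p Θ l|) + (L * d / 2) * η ^ 2
        + 2 * η * ∑ l, |gradient p Θ l| *
            (ℙ {ω | sgn (ghat ω l) ≠ sgn (gradient p Θ l)}).toReal := by
  have hstep := signSGD_expected_descent_step_general (μ := ℙ) hdiff (hlip · Θ)
    hghat.aemeasurable η
  rwa [Fintype.card_fin] at hstep
end
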